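/- arXiv:1101.0967 — 2 statements merged into one kernel-verified Lean document; each statement's English description precedes it below -/
import Mathlib

section
/- For any n ≥ 3 and any sequence x₁, …, xₙ of pairwise distinct real numbers, there exist reals y₁, …, yₙ such that the closed polygon with vertices (x₁,y₁), (x₂,y₂), …, (xₙ,yₙ) (in this cyclic order) is simple, i.e., non-self-intersecting. -/
/-- A closed polygonal path `p 0, p 1, …, p (n-1)` (cyclically) is simple: any two
non-adjacent edges are disjoint, and any two consecutive edges meet exactly in their
common endpoint. -/
def IsSimplePolygon {n : ℕ} [NeZero n] (p : Fin n → ℝ × ℝ) : Prop :=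
  (∀ k : Fin n,
      segment ℝ (p k) (p (k + 1)) ∩ segment ℝ (p (k + 1)) (p (k + 2)) = {p (k + 1)}) ∧
    ∀ k l : Fin n, k ≠ l → l ≠ k + 1 → k ≠ l + 1 →
      segment ℝ (p k) (p (k + 1)) ∩ segment ℝ (p l) (p (l + 1)) = ∅

/-- A segment on which a functional is at most `s` at the endpoints misses a segment on which it
exceeds `s` at the endpoints. -/
theorem segment_inter_segment_eq_empty_of_linear {E : Type*} [AddCommGroup E] [Module ℝ E]
    (f : E →ₗ[ℝ] ℝ) {s : ℝ} {a b c d : E} (ha : f a ≤ s) (hb : f b ≤ s) (hc : s < f c)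
    (hd : s < f d) : segment ℝ a b ∩ segment ℝ c d = ∅ := by
  have h₁ : segment ℝ a b ⊆ {z | f z ≤ s} :=
    (convex_halfSpace_le f.isLinear s).segment_subset ha hb
  have h₂ : segment ℝ c d ⊆ {z | s < f z} :=
    (convex_halfSpace_gt f.isLinear s).segment_subset hc hd
  refine Set.eq_empty_of_forall_notMem fun z hz => ?_
  have h₃ : f z ≤ s := h₁ hz.1
  exact h₃.not_gt (h₂ hz.2)

/-- Two segments with a common endpoint meet only there if a functional weakly separates them and
is not constant on the first one. -/
theorem segment_inter_segment_eq_singleton_of_linear {E : Type*} [AddCommGroup E] [Module ℝ E]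
    (f : E →ₗ[ℝ] ℝ) {a b c : E} (hab : f a < f b) (hbc : f b ≤ f c) :
    segment ℝ a b ∩ segment ℝ b c = {b} := by
  refine Set.Subset.antisymm ?_ (Set.singleton_subset_iff.2
    ⟨right_mem_segment ℝ a b, left_mem_segment ℝ b c⟩)
  rintro z ⟨⟨u, v, hu, -, huv, rfl⟩, hz⟩
  have h : f b ≤ f (u • a + v • b) :=
    (convex_halfSpace_ge f.isLinear (f b)).segment_subset (le_refl (f b)) hbc hz
  obtain rfl : v = 1 - u := by linarith
  simp only [map_add, map_smul, smul_eq_mul] at h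
  obtain rfl : u = 0 := by nlinarith
  simp

/-- In `Fin n`, the value of the cyclic successor. -/
theorem Fin.val_add_one_cyclic {n : ℕ} [NeZero n] (k : Fin n) :
    (k + 1).val = if k.val + 1 = n then 0 else k.val + 1 := by
  have hk := k.isLt
  rw [Fin.val_add, Fin.val_one', Nat.add_mod_mod]
  split_ifs with h
  · rw [h, Nat.mod_self]
  · exact Nat.mod_eq_of_lt (by omega)

/-- Simplicity of a polygon does not depend on the starting vertex. -/
theorem IsSimplePolygon.rotate {n : ℕ} [NeZero n] {p : Fin n → ℝ × ℝ} (hp : IsSimplePolygon p)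
    (a : Fin n) : IsSimplePolygon fun k => p (k - a) := by
  have h (k b : Fin n) : k + b - a = k - a + b := add_sub_right_comm k b a
  refine ⟨fun k => ?_, fun k l hkl hl hk => ?_⟩
  · simpa only [h] using hp.1 (k - a)
  · simp only [h]
    refine hp.2 _ _ (fun e => hkl (sub_left_injective e)) (fun e => hl ?_) (fun e => hk ?_)
    · rw [← h] at e
      exact sub_left_injective e
    · rw [← h] at e
      exact sub_left_injective e

/-- A polygon whose heights increase along the vertices is simple if some functional is minimal
exactly at its first and last vertices. -/
theorem IsSimplePolygon.of_linear {n : ℕ} [NeZero n] (hn : 3 ≤ n) {p : Fin n → ℝ × ℝ}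
    (H L : ℝ × ℝ →ₗ[ℝ] ℝ) (hH : ∀ k l : Fin n, k < l → H (p k) < H (p l)) {s : ℝ}
    (hL : ∀ k : Fin n, k.val = 0 ∨ k.val + 1 = n → L (p k) = s)
    (hL' : ∀ k : Fin n, k.val ≠ 0 → k.val + 1 ≠ n → s < L (p k)) : IsSimplePolygon p := by
  have key (k l : Fin n) (hkl : k < l) (hl : l ≠ k + 1) (hk : k ≠ l + 1) :
      segment ℝ (p k) (p (k + 1)) ∩ segment ℝ (p l) (p (l + 1)) = ∅ := by
    have hks := Fin.val_add_one_cyclic k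
    have hls := Fin.val_add_one_cyclic l
    rw [Ne, Fin.ext_iff] at hl hk
    rw [Fin.lt_def] at hkl
    have hlt := l.isLt
    rw [if_neg (by omega)] at hks
    split_ifs at hls with h
    · rw [Set.inter_comm]
      exact segment_inter_segment_eq_empty_of_linear L (hL l (by omega)).le
        (hL (l + 1) (by omega)).le (hL' k (by omega) (by omega))
        (hL' (k + 1) (by omega) (by omega))
    · exact segment_inter_segment_eq_empty_of_linear H
        (hH k (k + 1) (by rw [Fin.lt_def]; omega)).le le_rfl
        (hH _ _ (by rw [Fin.lt_def]; omega)) (hH _ _ (by rw [Fin.lt_def]; omega))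
  refine ⟨fun k => ?_, fun k l hkl hl hk => ?_⟩
  · have h₁ := Fin.val_add_one_cyclic k
    have h₂ := Fin.val_add_one_cyclic (k + 1)
    have e : k + 2 = k + 1 + 1 := by
      rw [add_assoc]
      congr 1
      simp [Fin.ext_iff, Fin.val_add]
    rw [e]
    have hk := k.isLt
    by_cases hk₁ : k.val + 1 = n
    · rw [if_pos hk₁] at h₁
      rw [if_neg (by omega)] at h₂
      rw [Set.inter_comm, segment_symm ℝ (p k), segment_symm ℝ (p (k + 1))]
      refine segment_inter_segment_eq_singleton_of_linear (-L) ?_ ?_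
      · simpa [hL (k + 1) (by omega)] using hL' (k + 1 + 1) (by omega) (by omega)
      · simp [hL (k + 1) (by omega), hL k (by omega)]
    · rw [if_neg hk₁] at h₁
      by_cases hk₂ : (k + 1).val + 1 = n
      · rw [if_pos hk₂] at h₂
        refine segment_inter_segment_eq_singleton_of_linear (-L) ?_ ?_
        · simpa [hL (k + 1) (by omega)] using hL' k (by omega) (by omega)
        · simp [hL (k + 1) (by omega), hL (k + 1 + 1) (by omega)]
      · rw [if_neg hk₂] at h₂
        exact segment_inter_segment_eq_singleton_of_linear H
          (hH _ _ (by rw [Fin.lt_def]; omega)) (hH _ _ (by rw [Fin.lt_def]; omega)).le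
  · rcases lt_or_gt_of_ne hkl with h | h
    · exact key k l h hl hk
    · rw [Set.inter_comm]
      exact key l k h hk hl

/-- If the first vertex is the leftmost one, heights `0, 1, …, n - 2, M` with `M` large make the
polygon simple. -/
theorem exists_simple_polygon_of_forall_lt {n : ℕ} [NeZero n] (hn : 3 ≤ n) (x : Fin n → ℝ)
    (hx : ∀ k, k ≠ 0 → x 0 < x k) :
    ∃ y : Fin n → ℝ, IsSimplePolygon (fun k => (x k, y k)) := by
  let last : Fin n := ⟨n - 1, by omega⟩
  have hM : ∀ᶠ M : ℝ in Filter.atTop, ∀ k : Fin n, k ≠ 0 →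
      (k.val : ℝ) * (x last - x 0) < M * (x k - x 0) := by
    refine Filter.eventually_all.2 fun k => ?_
    by_cases hk : k = 0
    · simp [hk]
    · filter_upwards [(Filter.tendsto_id.atTop_mul_const
        (sub_pos.2 (hx k hk))).eventually_gt_atTop ((k.val : ℝ) * (x last - x 0))] with M h _
      exact h
  obtain ⟨M, hM, hnM⟩ := (hM.and (Filter.eventually_gt_atTop (n : ℝ))).exists
  have hlast {k : Fin n} (h : k.val + 1 = n) : k = last := Fin.ext (by simp only [last]; omega)
  refine ⟨fun k => if k.val + 1 = n then M else k.val, IsSimplePolygon.of_linear hn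
    (LinearMap.snd ℝ ℝ ℝ) (M • LinearMap.fst ℝ ℝ ℝ - (x last - x 0) • LinearMap.snd ℝ ℝ ℝ)
    (s := M * x 0) (fun k l hkl => ?_) (fun k hk => ?_) (fun k hk hk' => ?_)⟩
  · have hl := l.isLt
    rw [Fin.lt_def] at hkl
    have hk : k.val + 1 ≠ n := by omega
    simp only [LinearMap.snd_apply, if_neg hk]
    split_ifs
    · exact lt_trans (by exact_mod_cast k.isLt) hnM
    · exact_mod_cast hkl
  · simp only [LinearMap.sub_apply, LinearMap.smul_apply, LinearMap.fst_apply,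
      LinearMap.snd_apply, smul_eq_mul]
    by_cases h : k.val + 1 = n
    · rw [if_pos h, hlast h]
      ring
    · have h₀ : k = 0 := Fin.ext (by simpa using hk.resolve_right h)
      rw [if_neg h, h₀]
      simp
  · have h := hM k fun e => hk (by simp [e])
    simp only [LinearMap.sub_apply, LinearMap.smul_apply, LinearMap.fst_apply,
      LinearMap.snd_apply, smul_eq_mul, if_neg hk']
    linarith

/-- Stretchability of cycles with prescribed `x`-coordinates: for any `n ≥ 3` and
pairwise distinct reals `x 0, …, x (n-1)`, there are `y`-coordinates making the closed
polygon with vertices `(x k, y k)` (in this cyclic order) simple. -/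
theorem exists_simple_polygon (n : ℕ) [NeZero n] (hn : 3 ≤ n) (x : Fin n → ℝ)
    (hx : Function.Injective x) :
    ∃ y : Fin n → ℝ, IsSimplePolygon (fun k => (x k, y k)) := by
  obtain ⟨a, ha⟩ := Finite.exists_min x
  obtain ⟨y, hy⟩ := exists_simple_polygon_of_forall_lt hn (fun k => x (k + a)) fun k hk => by
    simpa using (ha (k + a)).lt_of_ne fun e => hk (by simpa using hx e)
  refine ⟨fun k => y (k - a), ?_⟩
  simpa only [sub_add_cancel] using hy.rotate a
end

section
/- Among any four consecutive vertices v₁, v₂, v₃, v₄ on the boundary cycle of a face of a plane graph, at least one of the pairs (v₁, v₃), (v₂, v₄) is non-adjacent in the graph, provided the face has at least 4 distinct boundary vertices and the graph is simple and planar with this face having more than 3 vertices. -/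
namespace PlaneSeparation

open Set Filter Topology

/-- The quotient `(z - p) / (z - q)` has a continuous logarithm on `K`. -/
def LogRel (K : Set ℂ) (p q : ℂ) : Prop :=
  ∃ L : ℂ → ℂ, ContinuousOn L K ∧ ∀ z ∈ K, Complex.exp (L z) * (z - q) = z - p

theorem LogRel.symm {K : Set ℂ} {p q : ℂ} (h : LogRel K p q) : LogRel K q p := by
  obtain ⟨L, hL, h⟩ := h
  refine ⟨fun z => -L z, hL.neg, fun z hz => ?_⟩
  rw [← h z hz, ← mul_assoc, ← Complex.exp_add]
  simp

theorem LogRel.trans {K : Set ℂ} {p q r : ℂ} (h : LogRel K p q) (h' : LogRel K q r) :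
    LogRel K p r := by
  obtain ⟨L, hL, h⟩ := h
  obtain ⟨M, hM, h'⟩ := h'
  refine ⟨fun z => L z + M z, hL.add hM, fun z hz => ?_⟩
  rw [← h z hz, ← h' z hz, Complex.exp_add, mul_assoc]

theorem LogRel.mono {K K' : Set ℂ} {p q : ℂ} (h : LogRel K p q) (hK : K' ⊆ K) :
    LogRel K' p q := by
  obtain ⟨L, hL, h⟩ := h
  exact ⟨L, hL.mono hK, fun z hz => h z (hK hz)⟩

theorem eventually_logRel {K : Set ℂ} (hK : IsClosed K) {p : ℂ} (hp : p ∉ K) :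
    ∀ᶠ q in 𝓝 p, LogRel K q p := by
  obtain ⟨r, hr, hball⟩ := Metric.isOpen_iff.1 hK.isOpen_compl p hp
  filter_upwards [Metric.ball_mem_nhds p hr] with q hq
  have hne : ∀ z ∈ K, z - p ≠ 0 := fun z hz h0 => hp (sub_eq_zero.1 h0 ▸ hz)
  have hslit : ∀ z ∈ K, (z - q) / (z - p) ∈ Complex.slitPlane := by
    intro z hz
    have hzr : r ≤ ‖z - p‖ := by
      by_contra hlt
      exact hball (by simpa [Metric.mem_ball, dist_eq_norm] using hlt) hz
    have : (z - q) / (z - p) = 1 + (p - q) / (z - p) := by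
      field_simp [hne z hz]; ring
    rw [this]
    apply Complex.mem_slitPlane_of_norm_lt_one
    rw [norm_div, div_lt_one (norm_pos_iff.2 (hne z hz))]
    rw [Metric.mem_ball, dist_comm, dist_eq_norm] at hq
    exact hq.trans_le hzr
  refine ⟨fun z => Complex.log ((z - q) / (z - p)), ?_, fun z hz => ?_⟩
  · refine ContinuousOn.clog ?_ hslit
    exact ContinuousOn.div (by fun_prop) (by fun_prop) hne
  · rw [Complex.exp_log (Complex.slitPlane_ne_zero (hslit z hz)), div_mul_cancel₀ _ (hne z hz)]

/-- Points joined by a preconnected set missing `K` are related. -/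
theorem logRel_of_isPreconnected {K S : Set ℂ} (hK : IsClosed K) (hS : IsPreconnected S)
    (hSK : S ⊆ Kᶜ) {p q : ℂ} (hp : p ∈ S) (hq : q ∈ S) : LogRel K p q := by
  refine hS.induction₂ (LogRel K) (fun x hx => ?_) (fun _ _ _ _ _ _ => LogRel.trans)
    (fun _ _ _ _ => LogRel.symm) hp hq
  exact ((eventually_logRel hK (hSK hx)).filter_mono nhdsWithin_le_nhds).mono fun _ => LogRel.symm

theorem eqOn_of_exp_eqOn {X : Type*} [TopologicalSpace X] {s : Set X} (hs : IsPreconnected s)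
    {f g : X → ℂ} (hf : ContinuousOn f s) (hg : ContinuousOn g s)
    (h : ∀ x ∈ s, Complex.exp (f x) = Complex.exp (g x)) {a : X} (ha : a ∈ s) (hfg : f a = g a) :
    EqOn f g s :=
  Complex.isCoveringMap_exp.eqOn_of_comp_eqOn hs hf hg
    (fun x hx => Subtype.ext (h x hx)) ha hfg

theorem LogRel.union {A B : Set ℂ} (hA : IsClosed A) (hB : IsClosed B)
    (hAB : IsPreconnected (A ∩ B)) (hne : (A ∩ B).Nonempty) {p q : ℂ} (hq : q ∉ A ∩ B)
    (h : LogRel A p q) (h' : LogRel B p q) : LogRel (A ∪ B) p q := by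
  classical
  obtain ⟨L, hL, h⟩ := h
  obtain ⟨M, hM, h'⟩ := h'
  obtain ⟨a, ha⟩ := hne
  have hexp : ∀ z ∈ A ∩ B, Complex.exp (L z) = Complex.exp (M z) := fun z hz =>
    mul_right_cancel₀ (sub_ne_zero.2 (ne_of_mem_of_not_mem hz hq)) ((h z hz.1).trans (h' z hz.2).symm)
  have hc : Complex.exp (L a - M a) = 1 := by
    rw [Complex.exp_sub, hexp a ha, div_self (Complex.exp_ne_zero _)]
  have heq : EqOn L (fun z => M z + (L a - M a)) (A ∩ B) := by
    refine eqOn_of_exp_eqOn hAB (hL.mono inter_subset_left)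
      ((hM.mono inter_subset_right).add continuousOn_const) (fun z hz => ?_) ha (by ring)
    rw [Complex.exp_add, hc, mul_one, hexp z hz]
  have hleft : EqOn (fun z => if z ∈ A then L z else M z + (L a - M a)) L A :=
    fun z hz => if_pos hz
  have hright : EqOn (fun z => if z ∈ A then L z else M z + (L a - M a))
      (fun z => M z + (L a - M a)) B := by
    intro z hz
    by_cases hzA : z ∈ A
    · simpa [hzA] using heq ⟨hzA, hz⟩
    · simp [hzA]
  refine ⟨_, (hL.congr hleft).union_of_isClosed ((hM.add continuousOn_const).congr hright) hA hB,
    ?_⟩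
  rintro z (hz | hz)
  · rw [show ite _ _ _ = L z from hleft hz, h z hz]
  · rw [show ite _ _ _ = M z + (L a - M a) from hright hz, Complex.exp_add, hc, mul_one, h' z hz]

theorem exists_log {X : Type*} [TopologicalSpace X] [SimplyConnectedSpace X]
    [LocallyPathConnectedSpace X] {g : X → ℂ} (hg : Continuous g) (h0 : ∀ x, g x ≠ 0) :
    ∃ L : X → ℂ, Continuous L ∧ ∀ x, Complex.exp (L x) = g x := by
  obtain ⟨x₀⟩ : Nonempty X := inferInstance
  obtain ⟨F, ⟨-, hF⟩, -⟩ := Complex.isCoveringMapOn_exp.existsUnique_continuousMap_lifts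
    ⟨g, hg⟩ (Complex.exp_log (h0 x₀)) h0
  exact ⟨F, F.continuous, fun x => congrFun hF x⟩

/-- The function `z - p` has no continuous logarithm on a circle around `p`. -/
theorem no_log_on_circle {p : ℂ} {R : ℝ} (hR : 0 < R) {L : ℂ → ℂ} (hL : Continuous L)
    (h : ∀ z, ‖z - p‖ = R → Complex.exp (L z) = z - p) : False := by
  let γ : ℝ → ℂ := fun t => p + R * Complex.exp (t * Complex.I)
  have hγ : Continuous γ := by fun_prop
  have hexp : ∀ t, Complex.exp (L (γ t)) = R * Complex.exp (t * Complex.I) := by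
    intro t
    rw [h]
    · simp [γ]
    · simp [γ, Complex.norm_exp_ofReal_mul_I, abs_of_pos hR]
  have heq : EqOn (fun t => L (γ t)) (fun t : ℝ => t * Complex.I + L (γ 0)) univ := by
    refine eqOn_of_exp_eqOn isPreconnected_univ (hL.comp hγ).continuousOn
      (by fun_prop) (fun t _ => ?_) (mem_univ 0) (by simp)
    rw [hexp, Complex.exp_add, hexp]
    simp [mul_comm]
  have h2 := heq (mem_univ (2 * Real.pi))
  have hper : γ (2 * Real.pi) = γ 0 := by
    simp [γ, Complex.exp_two_pi_mul_I]
  simp only [hper] at h2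
  have : ((2 * Real.pi : ℝ) : ℂ) * Complex.I = 0 := by
    simpa using h2.symm
  simp [Real.pi_ne_zero] at this

theorem closure_connectedComponentIn_compl {K : Set ℂ} (hK : IsClosed K) {p z : ℂ}
    (hz : z ∈ closure (connectedComponentIn Kᶜ p)) (hzK : z ∉ K) :
    z ∈ connectedComponentIn Kᶜ p := by
  have hopen : IsOpen (connectedComponentIn Kᶜ z) := hK.isOpen_compl.connectedComponentIn
  obtain ⟨w, hwz, hwp⟩ := mem_closure_iff.1 hz _ hopen (mem_connectedComponentIn hzK)
  rw [connectedComponentIn_eq hwp, ← connectedComponentIn_eq hwz]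
  exact mem_connectedComponentIn hzK

theorem mem_component_of_logRel_of_bounded {K : Set ℂ} (hK : IsClosed K) {p q : ℂ}
    (hp : p ∉ K) (hbdd : Bornology.IsBounded (connectedComponentIn Kᶜ p)) (h : LogRel K p q) :
    q ∈ connectedComponentIn Kᶜ p := by
  classical
  by_contra hqU
  obtain ⟨L, hL, h⟩ := h
  set U := connectedComponentIn Kᶜ p with hU
  have hpU : p ∈ U := mem_connectedComponentIn hp
  have hUo : IsOpen U := hK.isOpen_compl.connectedComponentIn
  obtain ⟨M, hM⟩ := ContinuousMap.exists_restrict_eq hK ⟨K.domRestrict L, hL.domRestrict⟩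
  have hMK : ∀ z ∈ K, M z = L z := fun z hz => congrArg (fun F => F ⟨z, hz⟩) hM
  let g : ℂ → ℂ := fun z => if z ∈ U then Complex.exp (M z) * (z - q) else z - p
  have hg : Continuous g := by
    refine Continuous.if (fun z hz => ?_) (by fun_prop) (by fun_prop)
    have hzU : z ∈ closure U ∧ z ∉ U := by
      have := hz
      rwa [show {x | x ∈ U} = U from rfl, hUo.frontier_eq] at this
    have hzK : z ∈ K := by
      by_contra hzK
      exact hzU.2 (closure_connectedComponentIn_compl hK hzU.1 hzK)
    rw [hMK z hzK, h z hzK]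
  have hg0 : ∀ z, g z ≠ 0 := by
    intro z
    by_cases hz : z ∈ U
    · simp only [g, if_pos hz]
      exact mul_ne_zero (Complex.exp_ne_zero _) (sub_ne_zero.2 fun h0 => hqU (h0 ▸ hz))
    · simp only [g, if_neg hz]
      exact sub_ne_zero.2 fun h0 => hz (h0 ▸ hpU)
  obtain ⟨N, hN, hNg⟩ := exists_log hg hg0
  obtain ⟨R, hR, hUR⟩ := hbdd.subset_ball_lt 0 p
  refine no_log_on_circle hR hN (p := p) fun z hz => ?_
  have hzU : z ∉ U := fun hzU => by
    have := hUR hzU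
    rw [Metric.mem_ball, dist_eq_norm, hz] at this
    exact this.false
  rw [hNg]
  exact if_neg hzU

theorem isPreconnected_setOf_lt_norm {R : ℝ} (hR : 0 < R) :
    IsPreconnected {z : ℂ | R < ‖z‖} := by
  have himg : {z : ℂ | R < ‖z‖} = Complex.exp '' {z | Real.log R < z.re} := by
    ext z
    constructor
    · intro hz
      have hz0 : 0 < ‖z‖ := hR.trans hz
      exact ⟨Complex.log z, by simpa [Complex.log_re] using Real.log_lt_log hR hz,
        Complex.exp_log (norm_pos_iff.1 hz0)⟩
    · rintro ⟨w, hw, rfl⟩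
      simpa [Complex.norm_exp] using (Real.log_lt_iff_lt_exp hR).1 hw
  rw [himg]
  exact (convex_halfSpace_re_gt _).isPreconnected.image _ Complex.continuous_exp.continuousOn

/-- Borsuk's separation criterion. -/
theorem mem_component_of_logRel {K : Set ℂ} (hK : IsCompact K) {p q : ℂ}
    (hp : p ∉ K) (hq : q ∉ K) (h : LogRel K p q) : q ∈ connectedComponentIn Kᶜ p := by
  by_cases hbp : Bornology.IsBounded (connectedComponentIn Kᶜ p)
  · exact mem_component_of_logRel_of_bounded hK.isClosed hp hbp h
  by_cases hbq : Bornology.IsBounded (connectedComponentIn Kᶜ q)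
  · rw [← connectedComponentIn_eq
      (mem_component_of_logRel_of_bounded hK.isClosed hq hbq h.symm)]
    exact mem_connectedComponentIn hq
  obtain ⟨R, hR, hKR⟩ := hK.isBounded.subset_closedBall_lt 0 0
  have hout : {z : ℂ | R < ‖z‖} ⊆ Kᶜ := fun z hz hzK => by
    have := hKR hzK
    rw [mem_closedBall_zero_iff] at this
    exact absurd hz (not_lt.2 this)
  have key : ∀ x, ¬ Bornology.IsBounded (connectedComponentIn Kᶜ x) →
      ∃ y ∈ connectedComponentIn Kᶜ x, R < ‖y‖ := by
    intro x hx
    by_contra! hle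
    exact hx (Metric.isBounded_closedBall.subset fun y hy =>
      mem_closedBall_zero_iff.2 (hle y hy))
  obtain ⟨y, hy, hyR⟩ := key p hbp
  obtain ⟨w, hw, hwR⟩ := key q hbq
  have hwy : w ∈ connectedComponentIn Kᶜ y :=
    (isPreconnected_setOf_lt_norm hR).subset_connectedComponentIn hyR hout hwR
  rw [connectedComponentIn_eq hy, connectedComponentIn_eq hwy, ← connectedComponentIn_eq hw]
  exact mem_connectedComponentIn hq

/-- An arc does not separate the plane. -/
theorem logRel_arc {γ : ℝ → ℂ} {a b : ℝ} (hγ : Continuous γ) (hinj : InjOn γ (Icc a b))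
    (hab : a ≤ b) {p q : ℂ} (hp : p ∉ γ '' Icc a b) (hq : q ∉ γ '' Icc a b) :
    LogRel (γ '' Icc a b) p q := by
  have hproj : ∀ t, γ (projIcc a b hab t) ∈ γ '' Icc a b :=
    fun t => mem_image_of_mem γ (projIcc a b hab t).2
  have hp0 : ∀ t, γ (projIcc a b hab t) - p ≠ 0 :=
    fun t => sub_ne_zero.2 fun h0 => hp (h0 ▸ hproj t)
  have hq0 : ∀ t, γ (projIcc a b hab t) - q ≠ 0 :=
    fun t => sub_ne_zero.2 fun h0 => hq (h0 ▸ hproj t)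
  have hcont : Continuous fun t => γ (projIcc a b hab t) :=
    hγ.comp (continuous_subtype_val.comp continuous_projIcc)
  obtain ⟨L, hL, hexp⟩ := exists_log
    ((hcont.sub continuous_const).div (hcont.sub continuous_const) hq0)
    fun t => div_ne_zero (hp0 t) (hq0 t)
  have hemb : IsClosedEmbedding fun t : Icc a b => γ t :=
    (hγ.comp continuous_subtype_val).isClosedEmbedding hinj.injective
  obtain ⟨M, hM⟩ := ContinuousMap.exists_extension' hemb
    ⟨fun t : Icc a b => L t, hL.comp continuous_subtype_val⟩
  refine ⟨M, M.continuous.continuousOn, ?_⟩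
  rintro _ ⟨t, ht, rfl⟩
  have hMt : M (γ t) = L t := congrFun hM ⟨t, ht⟩
  have hpt : Complex.exp (L t) = (γ (projIcc a b hab t) - p) / (γ (projIcc a b hab t) - q) :=
    hexp t
  have hqt := hq0 t
  rw [projIcc_of_mem hab ht] at hpt hqt
  rw [hMt, hpt, div_mul_cancel₀ _ hqt]

section ClosedCurve

variable {f : ℝ → ℂ}

theorem map_fract (hper : Function.Periodic f 1) (t : ℝ) : f (Int.fract t) = f t := by
  simpa [Int.self_sub_floor] using hper.sub_int_mul_eq (x := t) ⌊t⌋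

theorem exists_int_of_eq (hper : Function.Periodic f 1) (hinj : InjOn f (Ico 0 1)) {s t : ℝ}
    (h : f s = f t) : ∃ n : ℤ, s = t + n := by
  have : Int.fract s = Int.fract t :=
    hinj ⟨Int.fract_nonneg s, Int.fract_lt_one s⟩ ⟨Int.fract_nonneg t, Int.fract_lt_one t⟩
      (by rw [map_fract hper, map_fract hper, h])
  obtain ⟨n, hn⟩ := Int.fract_eq_fract.1 this
  exact ⟨n, by linarith⟩

theorem image_Ico_eq_image_Icc (hper : Function.Periodic f 1) (a : ℝ) :
    f '' Ico 0 1 = f '' Icc a (a + 1) := by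
  rw [hper.image_Icc one_pos a]
  refine (image_subset_range _ _).antisymm ?_
  rintro _ ⟨t, rfl⟩
  exact ⟨Int.fract t, ⟨Int.fract_nonneg t, Int.fract_lt_one t⟩, map_fract hper t⟩

/-- Every point of a Jordan curve is on the boundary of every face. -/
theorem mem_closure_face (hf : Continuous f) (hper : Function.Periodic f 1)
    (hinj : InjOn f (Ico 0 1)) {p q : ℂ} (hp : p ∉ f '' Ico 0 1) (hq : q ∉ f '' Ico 0 1)
    (hpq : q ∉ connectedComponentIn (f '' Ico 0 1)ᶜ p) (t : ℝ) :
    f t ∈ closure (connectedComponentIn (f '' Ico 0 1)ᶜ p) := by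
  have hCK : IsClosed (f '' Ico 0 1) := by
    rw [image_Ico_eq_image_Icc hper 0]
    exact (isCompact_Icc.image hf).isClosed
  set F := connectedComponentIn (f '' Ico 0 1)ᶜ p with hF
  by_contra hcl
  have hnhds : f ⁻¹' (closure F)ᶜ ∈ 𝓝 t :=
    (isClosed_closure.isOpen_compl.preimage hf).mem_nhds hcl
  obtain ⟨ε', hε', hball'⟩ := Metric.mem_nhds_iff.1 hnhds
  obtain ⟨ε, hε, hε2, hball⟩ : ∃ ε : ℝ, 0 < ε ∧ ε < 1 / 2 ∧
      ∀ s, t - ε < s → s < t + ε → f s ∉ closure F := by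
    refine ⟨min ε' (1 / 4), by positivity, (min_le_right _ _).trans_lt (by norm_num), ?_⟩
    intro s h1 h2
    refine @hball' s ?_
    rw [Metric.mem_ball, Real.dist_eq, abs_lt]
    have := min_le_left ε' (1 / 4)
    constructor <;> linarith
  have hsub : f '' Icc (t + ε) (t + 1 - ε) ⊆ f '' Ico 0 1 := by
    rw [image_Ico_eq_image_Icc hper t]
    exact image_mono (Icc_subset_Icc (by linarith) (by linarith))
  have harc : InjOn f (Icc (t + ε) (t + 1 - ε)) := by
    intro x hx y hy hxy
    obtain ⟨n, hn⟩ := exists_int_of_eq hper hinj hxy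
    have h1 : (n : ℝ) < 1 := by linarith [hx.2, hy.1]
    have h2 : (-1 : ℝ) < n := by linarith [hx.1, hy.2]
    have h3 : n = 0 := by
      have h1' : n < 1 := by exact_mod_cast h1
      have h2' : -1 < n := by exact_mod_cast h2
      omega
    simpa [h3] using hn
  have hpA := fun h => hp (hsub h)
  have hqA := fun h => hq (hsub h)
  have hqV := mem_component_of_logRel (isCompact_Icc.image hf) hpA hqA
    (logRel_arc hf harc (by linarith) hpA hqA)
  have hVF : connectedComponentIn (f '' Icc (t + ε) (t + 1 - ε))ᶜ p ⊆ F := by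
    refine isPreconnected_connectedComponentIn.subset_of_closure_inter_subset
      hCK.isOpen_compl.connectedComponentIn
      ⟨p, mem_connectedComponentIn hpA, mem_connectedComponentIn hp⟩ ?_
    rintro z ⟨hzF, hzV⟩
    refine closure_connectedComponentIn_compl hCK hzF fun hzC => ?_
    rw [image_Ico_eq_image_Icc hper (t - ε)] at hzC
    obtain ⟨s, hs, rfl⟩ := hzC
    rcases lt_or_ge s (t + ε) with hlt | hge
    · rcases hs.1.lt_or_eq with h1 | h1
      · exact hball s h1 hlt hzF
      · refine connectedComponentIn_subset _ _ hzV ⟨s + 1, ?_, hper s⟩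
        constructor <;> linarith
    · exact connectedComponentIn_subset _ _ hzV ⟨s, ⟨hge, by linarith [hs.2]⟩, rfl⟩
  exact hpq (hVF hqV)

theorem not_disjoint_of_interleaved (hf : Continuous f) (hper : Function.Periodic f 1)
    (hinj : InjOn f (Ico 0 1)) {t₁ t₂ t₃ t₄ : ℝ}
    (h12 : t₁ < t₂) (h23 : t₂ < t₃) (h34 : t₃ < t₄) (h41 : t₄ < t₁ + 1)
    {x₀ : ℂ} (hx₀ : x₀ ∉ f '' Ico 0 1) {δ₁ δ₂ : ℝ → ℂ}
    (hδ₁c : ContinuousOn δ₁ (Icc 0 1)) (hδ₂c : ContinuousOn δ₂ (Icc 0 1))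
    (hδ₁0 : δ₁ 0 = f t₁) (hδ₁1 : δ₁ 1 = f t₃) (hδ₂0 : δ₂ 0 = f t₂) (hδ₂1 : δ₂ 1 = f t₄)
    (hδ₁F : ∀ t ∈ Ioo (0 : ℝ) 1, δ₁ t ∉ connectedComponentIn (f '' Ico 0 1)ᶜ x₀)
    (hδ₂F : ∀ t ∈ Ioo (0 : ℝ) 1, δ₂ t ∉ connectedComponentIn (f '' Ico 0 1)ᶜ x₀)
    (hδ₂C : ∀ t ∈ Ioo (0 : ℝ) 1, δ₂ t ∉ f '' Ico 0 1) :
    ¬ Disjoint (δ₁ '' Icc 0 1) (δ₂ '' Icc 0 1) := by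
  intro hdisj
  set C := f '' Ico 0 1 with hC
  set F := connectedComponentIn Cᶜ x₀ with hF
  set D := δ₁ '' Icc 0 1 with hD
  have hmid : (1 / 2 : ℝ) ∈ Ioo (0 : ℝ) 1 := by norm_num
  have hfC : ∀ t, f t ∈ C := fun t => by
    rw [hC, image_Ico_eq_image_Icc hper t]
    exact mem_image_of_mem f (left_mem_Icc.2 (by linarith))
  have hFC : F ⊆ Cᶜ := connectedComponentIn_subset _ _
  have hcl := mem_closure_face hf hper hinj hx₀ (hδ₂C _ hmid) (hδ₂F _ hmid)
  have hDF : Disjoint F D := by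
    rw [disjoint_left]
    rintro _ hz ⟨t, ht, rfl⟩
    rcases ht.1.eq_or_lt with rfl | h0
    · exact hFC hz (hδ₁0 ▸ hfC _)
    rcases ht.2.eq_or_lt with rfl | h1
    · exact hFC hz (hδ₁1 ▸ hfC _)
    exact hδ₁F t ⟨h0, h1⟩ hz
  have hDcompact : IsCompact D := isCompact_Icc.image_of_continuousOn hδ₁c
  have key : ∀ (a b t : ℝ) (s : Set ℝ), IsPreconnected s → s ⊆ Icc 0 1 → (1 / 2 : ℝ) ∈ s →
      (∀ x ∈ s, δ₂ x = f t ∨ x ∈ Ioo (0 : ℝ) 1) → (∃ x ∈ s, δ₂ x = f t) → b < t → t < a + 1 →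
      LogRel (f '' Icc a b ∪ D) x₀ (δ₂ (1 / 2)) := by
    intro a b t s hs hs01 hhalf hcases hex hbt hta
    have hft : f t ∉ f '' Icc a b := by
      rintro ⟨u, hu, hut⟩
      obtain ⟨n, hn⟩ := exists_int_of_eq hper hinj hut
      have h1 : (n : ℝ) < 0 := by linarith [hu.2]
      have h2 : (-1 : ℝ) < n := by linarith [hu.1]
      have h1' : n < 0 := by exact_mod_cast h1
      have h2' : -1 < n := by exact_mod_cast h2
      omega
    have hsubC : f '' Icc a b ⊆ C := by
      rintro _ ⟨u, -, rfl⟩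
      exact hfC u
    obtain ⟨x, hxs, hx⟩ := hex
    have hFt : IsPreconnected (insert (f t) F) :=
      isPreconnected_connectedComponentIn.subset_closure (subset_insert _ _)
        (insert_subset (hcl t) subset_closure)
    refine logRel_of_isPreconnected ((isCompact_Icc.image hf).union hDcompact).isClosed
      (hFt.union (f t) (mem_insert _ _) (hx ▸ mem_image_of_mem δ₂ hxs)
        (hs.image δ₂ (hδ₂c.mono hs01))) ?_
      (Or.inl (Or.inr (mem_connectedComponentIn hx₀))) (Or.inr (mem_image_of_mem δ₂ hhalf))
    have himg : δ₂ '' s ⊆ (f '' Icc a b ∪ D)ᶜ := by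
      rintro _ ⟨y, hy, rfl⟩ (h | h)
      · rcases hcases y hy with h' | h'
        · exact hft (h' ▸ h)
        · exact hδ₂C y h' (hsubC h)
      · exact disjoint_left.1 hdisj h (mem_image_of_mem δ₂ (hs01 hy))
    refine union_subset (insert_subset (himg ⟨x, hxs, hx⟩) ?_) himg
    rintro z hz (h | h)
    · exact hFC hz (hsubC h)
    · exact disjoint_left.1 hDF hz h
  have hA := key t₁ t₃ t₄ (Ioc 0 1) isPreconnected_Ioc Ioc_subset_Icc_self (by norm_num)
    (fun x hx => hx.2.eq_or_lt.imp (fun h => by rw [h, hδ₂1]) fun h => ⟨hx.1, h⟩)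
    ⟨1, by norm_num, hδ₂1⟩ h34 h41
  have hB := key t₃ (t₁ + 1) (t₂ + 1) (Ico 0 1) isPreconnected_Ico Ico_subset_Icc_self
    (by norm_num)
    (fun x hx => hx.1.eq_or_lt.imp (fun h => by rw [← h, hδ₂0, hper]) fun h => ⟨h, hx.2⟩)
    ⟨0, by norm_num, by rw [hδ₂0, hper]⟩ (by linarith) (by linarith)
  have hinter : (f '' Icc t₁ t₃ ∪ D) ∩ (f '' Icc t₃ (t₁ + 1) ∪ D) = D := by
    rw [← inter_union_distrib_right, union_eq_right]
    rintro _ ⟨⟨u, hu, rfl⟩, v, hv, huv⟩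
    obtain ⟨n, hn⟩ := exists_int_of_eq hper hinj huv
    have h1 : (n : ℝ) < 2 := by linarith [hu.1, hv.2]
    have h2 : (-1 : ℝ) < n := by linarith [hu.2, hv.1]
    have h1' : n < 2 := by exact_mod_cast h1
    have h2' : -1 < n := by exact_mod_cast h2
    obtain rfl | rfl : n = 0 ∨ n = 1 := by omega
    · have : u = t₃ := le_antisymm hu.2 (by push_cast at hn; linarith [hv.1])
      exact ⟨1, by norm_num, by rw [hδ₁1, this]⟩
    · have : u = t₁ := le_antisymm (by push_cast at hn; linarith [hv.2]) hu.1
      exact ⟨0, by norm_num, by rw [hδ₁0, this]⟩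
  have hD0 : δ₁ 0 ∈ D := mem_image_of_mem δ₁ (by norm_num)
  have hqD : δ₂ (1 / 2) ∉ D := fun h =>
    disjoint_left.1 hdisj h (mem_image_of_mem δ₂ (Ioo_subset_Icc_self hmid))
  have hunion := LogRel.union ((isCompact_Icc.image hf).union hDcompact).isClosed
    ((isCompact_Icc.image hf).union hDcompact).isClosed
    (by rw [hinter]; exact isPreconnected_Icc.image δ₁ hδ₁c) (by rw [hinter]; exact ⟨_, hD0⟩)
    (by rwa [hinter]) hA hB
  have hCsub : C ⊆ (f '' Icc t₁ t₃ ∪ D) ∪ (f '' Icc t₃ (t₁ + 1) ∪ D) := by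
    rw [hC, image_Ico_eq_image_Icc hper t₁,
      ← Icc_union_Icc_eq_Icc (h12.trans h23).le (h34.trans h41).le, image_union]
    exact union_subset_union subset_union_left subset_union_left
  have hCc : IsCompact C := by
    rw [hC, image_Ico_eq_image_Icc hper 0]
    exact isCompact_Icc.image hf
  exact hδ₂F _ hmid (mem_component_of_logRel hCc hx₀ (hδ₂C _ hmid) (hunion.mono hCsub))

end ClosedCurve

end PlaneSeparation


/-- Geometric core of Lemma 3.1's adjacency claim: let `f` be a simple closed curve in
the plane (continuous, `1`-periodic, injective on `[0,1)`) with image `C`, let `F` be a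
connected component of the complement of `C` (a face), and let `f t₁, f t₂, f t₃, f t₄`
be four points appearing in this cyclic order on the curve. Then two arcs joining
`f t₁` to `f t₃` and `f t₂` to `f t₄`, whose interiors avoid both the face `F` and the
curve `C` (i.e. both "diagonals" are drawn outside the face), cannot be disjoint: they
are forced to cross. Consequently `v₁v₃` and `v₂v₄` cannot both be edges of a plane
graph with face `F`, i.e. at least one of the pairs `(v₁,v₃)`, `(v₂,v₄)` is
non-adjacent. -/
theorem interleaved_diagonals_outside_face_cross
    (f : ℝ → ℝ × ℝ) (hf : Continuous f) (hper : ∀ t, f (t + 1) = f t)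
    (hinj : Set.InjOn f (Set.Ico 0 1))
    (t₁ t₂ t₃ t₄ : ℝ) (ht : 0 ≤ t₁ ∧ t₁ < t₂ ∧ t₂ < t₃ ∧ t₃ < t₄ ∧ t₄ < 1)
    (C : Set (ℝ × ℝ)) (hC : C = f '' Set.Ico 0 1)
    (x₀ : ℝ × ℝ) (hx₀ : x₀ ∉ C)
    (F : Set (ℝ × ℝ)) (hF : F = connectedComponentIn Cᶜ x₀)
    (δ₁ δ₂ : ℝ → ℝ × ℝ)
    (hδ₁c : ContinuousOn δ₁ (Set.Icc 0 1)) (hδ₂c : ContinuousOn δ₂ (Set.Icc 0 1))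
    (hδ₁e : δ₁ 0 = f t₁ ∧ δ₁ 1 = f t₃) (hδ₂e : δ₂ 0 = f t₂ ∧ δ₂ 1 = f t₄)
    (hδ₁i : δ₁ '' Set.Ioo 0 1 ⊆ (F ∪ C)ᶜ) (hδ₂i : δ₂ '' Set.Ioo 0 1 ⊆ (F ∪ C)ᶜ) :
    ¬ Disjoint (δ₁ '' Set.Icc 0 1) (δ₂ '' Set.Icc 0 1) := by
  subst hC hF
  let e : ℝ × ℝ ≃ₜ ℂ := Complex.equivRealProdCLM.symm.toHomeomorph
  have himg : (fun t => e (f t)) '' Set.Ico 0 1 = e '' (f '' Set.Ico 0 1) :=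
    Set.image_comp e f _
  have hcompl : (e '' (f '' Set.Ico 0 1))ᶜ = e '' (f '' Set.Ico 0 1)ᶜ :=
    (Set.image_compl_eq e.bijective).symm
  have hcomp : connectedComponentIn ((fun t => e (f t)) '' Set.Ico 0 1)ᶜ (e x₀) =
      e '' connectedComponentIn (f '' Set.Ico 0 1)ᶜ x₀ := by
    rw [himg, hcompl, e.image_connectedComponentIn hx₀]
  obtain ⟨h0, h12, h23, h34, h4⟩ := ht
  have key := PlaneSeparation.not_disjoint_of_interleaved (f := fun t => e (f t))
    (e.continuous.comp hf) (fun t => congrArg e (hper t))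
    (fun x hx y hy h => hinj hx hy (e.injective h)) h12 h23 h34 (by linarith)
    (x₀ := e x₀) (by rwa [himg, e.injective.mem_set_image])
    (δ₁ := fun t => e (δ₁ t)) (δ₂ := fun t => e (δ₂ t))
    (e.continuous.comp_continuousOn hδ₁c) (e.continuous.comp_continuousOn hδ₂c)
    (congrArg e hδ₁e.1) (congrArg e hδ₁e.2) (congrArg e hδ₂e.1) (congrArg e hδ₂e.2)
    (fun t ht h => by
      rw [hcomp, e.injective.mem_set_image] at h
      exact hδ₁i (Set.mem_image_of_mem _ ht) (Or.inl h))
    (fun t ht h => by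
      rw [hcomp, e.injective.mem_set_image] at h
      exact hδ₂i (Set.mem_image_of_mem _ ht) (Or.inl h))
    (fun t ht h => by
      rw [himg, e.injective.mem_set_image] at h
      exact hδ₂i (Set.mem_image_of_mem _ ht) (Or.inr h))
  intro hdisj
  apply key
  have := (Set.disjoint_image_iff e.injective).2 hdisj
  rwa [Set.image_image, Set.image_image] at this
end
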